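/- arXiv:2006.16685 — 7 statements merged into one kernel-verified Lean document; each statement's English description precedes it below -/
import Mathlib

section
/- Let f : ℝ → ℝ be continuous on [0,1]. Then for every u ∈ [0,1], ∫₀ᵘ ( x / √(u² − x²) ) · ( ∫₀ˣ f(v)/√(x² − v²) dv ) dx = (π/2) · ∫₀ᵘ f(v) dv. -/
open Real intervalIntegral

/-- An antiderivative of the Abel kernel `x / (√(u² - x²) √(x² - v²))`. -/
theorem hasDerivAt_half_arcsin_abel {u v x : ℝ} (hv : 0 ≤ v) (hx : x ∈ Set.Ioo v u) :
    HasDerivAt (fun y => arcsin ((2 * y ^ 2 - u ^ 2 - v ^ 2) / (u ^ 2 - v ^ 2)) / 2)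
      (x / √(u ^ 2 - x ^ 2) * (1 / √(x ^ 2 - v ^ 2))) x := by
  obtain ⟨hvx, hxu⟩ := hx
  have h₁ : 0 < x ^ 2 - v ^ 2 := by nlinarith
  have h₂ : 0 < u ^ 2 - x ^ 2 := by nlinarith
  have h₃ : 0 < u ^ 2 - v ^ 2 := by linarith
  have hlow : (2 * x ^ 2 - u ^ 2 - v ^ 2) / (u ^ 2 - v ^ 2) ≠ -1 := by
    rw [Ne, div_eq_iff h₃.ne']
    intro h
    linarith
  have hupp : (2 * x ^ 2 - u ^ 2 - v ^ 2) / (u ^ 2 - v ^ 2) ≠ 1 := by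
    rw [Ne, div_eq_iff h₃.ne']
    intro h
    linarith
  have hinner : HasDerivAt (fun y : ℝ => (2 * y ^ 2 - u ^ 2 - v ^ 2) / (u ^ 2 - v ^ 2))
      (4 * x / (u ^ 2 - v ^ 2)) x := by
    have h := (((((hasDerivAt_id x).pow 2).const_mul 2).sub_const (u ^ 2)).sub_const
      (v ^ 2)).div_const (u ^ 2 - v ^ 2)
    exact h.congr_deriv (by simp only [id]; ring)
  have h := ((hasDerivAt_arcsin hlow hupp).comp x hinner).div_const 2
  have hsqrt : √(1 - ((2 * x ^ 2 - u ^ 2 - v ^ 2) / (u ^ 2 - v ^ 2)) ^ 2)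
      = 2 * (√(u ^ 2 - x ^ 2) * √(x ^ 2 - v ^ 2)) / (u ^ 2 - v ^ 2) := by
    rw [sqrt_eq_iff_mul_self_eq_of_pos (by positivity)]
    have e₁ := mul_self_sqrt h₂.le
    have e₂ := mul_self_sqrt h₁.le
    rw [div_mul_div_comm, mul_mul_mul_comm, mul_mul_mul_comm √_, e₁, e₂]
    field_simp
    ring
  refine h.congr_deriv ?_
  rw [hsqrt]
  have := sqrt_pos.2 h₁
  have := sqrt_pos.2 h₂
  field_simp
  ring

theorem continuous_half_arcsin_abel (u v : ℝ) :
    Continuous (fun y => arcsin ((2 * y ^ 2 - u ^ 2 - v ^ 2) / (u ^ 2 - v ^ 2)) / 2) := by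
  fun_prop

theorem intervalIntegrable_abel_kernel {u v : ℝ} (hv : 0 ≤ v) (hvu : v < u) :
    IntervalIntegrable (fun x => x / √(u ^ 2 - x ^ 2) * (1 / √(x ^ 2 - v ^ 2)))
      MeasureTheory.volume v u := by
  refine intervalIntegrable_deriv_of_nonneg (continuous_half_arcsin_abel u v).continuousOn ?_ ?_ <;>
    rw [min_eq_left hvu.le, max_eq_right hvu.le] <;> intro x hx
  · exact hasDerivAt_half_arcsin_abel hv hx
  · have : 0 ≤ x := hv.trans hx.1.le
    positivity

theorem integral_abel_kernel {u v : ℝ} (hv : 0 ≤ v) (hvu : v < u) :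
    ∫ x in v..u, x / √(u ^ 2 - x ^ 2) * (1 / √(x ^ 2 - v ^ 2)) = π / 2 := by
  rw [integral_eq_sub_of_hasDerivAt_of_le hvu.le (continuous_half_arcsin_abel u v).continuousOn
    (fun x hx => hasDerivAt_half_arcsin_abel hv hx) (intervalIntegrable_abel_kernel hv hvu)]
  have h : u ^ 2 - v ^ 2 ≠ 0 := by nlinarith
  have e₁ : (2 * u ^ 2 - u ^ 2 - v ^ 2) / (u ^ 2 - v ^ 2) = 1 := by
    rw [div_eq_one_iff_eq h]
    ring
  have e₂ : (2 * v ^ 2 - u ^ 2 - v ^ 2) / (u ^ 2 - v ^ 2) = -1 := by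
    rw [div_eq_iff h]
    ring
  rw [e₁, e₂, arcsin_one, arcsin_neg_one]
  ring

/-- The Abel kernel vanishes for `x ≤ v` by the conventions on `√` and division. -/
theorem one_div_sqrt_sq_sub_sq_eq_zero {x v : ℝ} (hx : 0 ≤ x) (hxv : x ≤ v) :
    1 / √(x ^ 2 - v ^ 2) = 0 := by
  rw [sqrt_eq_zero_of_nonpos (by nlinarith), div_zero]

theorem integrableOn_abel_kernel {u v : ℝ} (hv : 0 ≤ v) (hvu : v < u) :
    MeasureTheory.IntegrableOn (fun x => x / √(u ^ 2 - x ^ 2) * (1 / √(x ^ 2 - v ^ 2)))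
      (Set.Ioc 0 u) := by
  refine MeasureTheory.IntegrableOn.of_forall_sdiff_eq_zero
    ((intervalIntegrable_iff_integrableOn_Ioc_of_le hvu.le).1
      (intervalIntegrable_abel_kernel hv hvu)) measurableSet_Ioc ?_
  rintro x ⟨hx, hx'⟩
  have hxv : x ≤ v := not_lt.1 fun h => hx' ⟨h, hx.2⟩
  rw [one_div_sqrt_sq_sub_sq_eq_zero hx.1.le hxv, mul_zero]

theorem setIntegral_abel_kernel {u v : ℝ} (hv : 0 ≤ v) (hvu : v < u) :
    ∫ x in Set.Ioc 0 u, x / √(u ^ 2 - x ^ 2) * (1 / √(x ^ 2 - v ^ 2)) = π / 2 := by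
  rw [← integral_abel_kernel hv hvu, integral_of_le hvu.le]
  refine MeasureTheory.setIntegral_eq_of_subset_of_forall_sdiff_eq_zero measurableSet_Ioc
    (Set.Ioc_subset_Ioc_left hv) ?_
  rintro x ⟨hx, hx'⟩
  have hxv : x ≤ v := not_lt.1 fun h => hx' ⟨h, hx.2⟩
  rw [one_div_sqrt_sq_sub_sq_eq_zero hx.1.le hxv, mul_zero]

/-- The Abel integrand is integrable on the square `(0, u]²`. -/
theorem integrable_abel_prod {f : ℝ → ℝ} {u : ℝ}
    (hf : MeasureTheory.IntegrableOn f (Set.Ioc 0 u)) :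
    MeasureTheory.Integrable
      (fun p : ℝ × ℝ => p.1 / √(u ^ 2 - p.1 ^ 2) * (1 / √(p.1 ^ 2 - p.2 ^ 2)) * f p.2)
      ((MeasureTheory.volume.restrict (Set.Ioc 0 u)).prod
        (MeasureTheory.volume.restrict (Set.Ioc 0 u))) := by
  have hlt : ∀ᵐ v ∂MeasureTheory.volume.restrict (Set.Ioc 0 u), 0 < v ∧ v < u := by
    rw [← MeasureTheory.restrict_Ioo_eq_restrict_Ioc]
    exact MeasureTheory.ae_restrict_mem measurableSet_Ioo
  have hmeas : Measurable
      (fun p : ℝ × ℝ => p.1 / √(u ^ 2 - p.1 ^ 2) * (1 / √(p.1 ^ 2 - p.2 ^ 2))) := by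
    fun_prop
  refine (MeasureTheory.integrable_prod_iff'
    (hmeas.aestronglyMeasurable.mul hf.aestronglyMeasurable.comp_snd)).2 ⟨?_, ?_⟩
  · filter_upwards [hlt] with v hv
    exact (integrableOn_abel_kernel hv.1.le hv.2).mul_const (f v)
  · refine (hf.norm.const_mul (π / 2)).congr ?_
    filter_upwards [hlt] with v hv
    rw [← setIntegral_abel_kernel hv.1.le hv.2, ← MeasureTheory.integral_mul_const]
    refine MeasureTheory.setIntegral_congr_fun measurableSet_Ioc fun x hx => ?_
    have hx0 : 0 ≤ x := hx.1.le
    have hk : 0 ≤ x / √(u ^ 2 - x ^ 2) * (1 / √(x ^ 2 - v ^ 2)) := by positivity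
    simp only [Pi.mul_apply, norm_mul _ (f v), norm_of_nonneg hk]

/-- Composing the Abel-type transform `𝒜f(x) = ∫₀ˣ f(v)/√(x² − v²) dv` with the
kernel `x/√(u² − x²)` recovers `(π/2) ∫₀ᵘ f`. -/
theorem abel_transform_left_inverse_integral
    (f : ℝ → ℝ) (hf : ContinuousOn f (Set.Icc 0 1)) :
    ∀ u ∈ Set.Icc (0 : ℝ) 1,
      ∫ x in (0:ℝ)..u,
          (x / Real.sqrt (u ^ 2 - x ^ 2)) *
            ∫ v in (0:ℝ)..x, f v / Real.sqrt (x ^ 2 - v ^ 2)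
        = (π / 2) * ∫ v in (0:ℝ)..u, f v := by
  rintro u ⟨hu0, hu1⟩
  have hfi : MeasureTheory.IntegrableOn f (Set.Ioc 0 u) :=
    (hf.integrableOn_Icc).mono_set
      (Set.Ioc_subset_Icc_self.trans (Set.Icc_subset_Icc_right hu1))
  rw [integral_of_le hu0, integral_of_le hu0]
  calc
    _ = ∫ x in Set.Ioc 0 u, ∫ v in Set.Ioc 0 u,
          x / √(u ^ 2 - x ^ 2) * (1 / √(x ^ 2 - v ^ 2)) * f v := by
      refine MeasureTheory.setIntegral_congr_fun measurableSet_Ioc fun x hx => ?_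
      have hsub : ∫ v in Set.Ioc 0 u, 1 / √(x ^ 2 - v ^ 2) * f v
          = ∫ v in Set.Ioc 0 x, 1 / √(x ^ 2 - v ^ 2) * f v := by
        refine MeasureTheory.setIntegral_eq_of_subset_of_forall_sdiff_eq_zero measurableSet_Ioc
          (Set.Ioc_subset_Ioc_right hx.2) ?_
        rintro v ⟨hv, hv'⟩
        have hxv : x ≤ v := (not_le.1 fun h => hv' ⟨hv.1, h⟩).le
        rw [one_div_sqrt_sq_sub_sq_eq_zero hx.1.le hxv, zero_mul]
      simp only [mul_assoc, MeasureTheory.integral_const_mul]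
      rw [hsub, integral_of_le hx.1.le]
      simp only [div_eq_inv_mul, mul_one]
    _ = ∫ v in Set.Ioc 0 u, ∫ x in Set.Ioc 0 u,
          x / √(u ^ 2 - x ^ 2) * (1 / √(x ^ 2 - v ^ 2)) * f v :=
      MeasureTheory.integral_integral_swap (integrable_abel_prod hfi)
    _ = ∫ v in Set.Ioc 0 u, π / 2 * f v := by
      rw [← MeasureTheory.restrict_Ioo_eq_restrict_Ioc]
      refine MeasureTheory.setIntegral_congr_fun measurableSet_Ioo fun v hv => ?_
      simp only [MeasureTheory.restrict_Ioo_eq_restrict_Ioc, MeasureTheory.integral_mul_const,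
        setIntegral_abel_kernel hv.1.le hv.2]
    _ = π / 2 * ∫ v in Set.Ioc 0 u, f v := MeasureTheory.integral_const_mul _ _
end

section
/- Let P : ℝ → ℝ be continuous on [0,1] and suppose that for every α ∈ (0,1], ∫_{arccos(√α)}^{π/2} P(cos²ϑ) / √(α − cos²ϑ) dϑ = 0. Then P(t) = 0 for every t ∈ [0,1]. -/
open Real intervalIntegral

/-- Consecutive Wallis integrals over a quarter period multiply to `π / (2 (n + 1))`. -/
lemma integral_sin_pow_mul_integral_sin_pow_succ (n : ℕ) :
    (∫ x in (0 : ℝ)..π / 2, sin x ^ n) * (∫ x in (0 : ℝ)..π / 2, sin x ^ (n + 1)) =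
      π / (2 * (n + 1)) := by
  induction n with
  | zero => simp
  | succ k ih =>
    have hrec := integral_sin_pow (a := 0) (b := π / 2) (n := k)
    simp only [sin_zero, cos_pi_div_two, ne_eq, Nat.add_eq_zero_iff, one_ne_zero, and_false,
      not_false_eq_true, zero_pow, zero_mul, mul_zero, sub_zero, zero_div, zero_add] at hrec
    rw [show k + 1 + 1 = k + 2 from rfl, hrec]
    calc _ = ((k : ℝ) + 1) / (k + 2) * ((∫ x in (0 : ℝ)..π / 2, sin x ^ k) *
            ∫ x in (0 : ℝ)..π / 2, sin x ^ (k + 1)) := by ring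
      _ = _ := by
        rw [ih]
        push_cast
        field_simp
        ring

/-- The average of `x ↦ p x` over an octant of the unit sphere, for `p` polynomial: by Archimedes'
theorem the coordinate `x` is uniformly distributed on `[0, 1]`. -/
lemma integral_sin_mul_integral_eval_sin_mul_sin (p : Polynomial ℝ) :
    ∫ ψ in (0 : ℝ)..π / 2, sin ψ * ∫ φ in (0 : ℝ)..π / 2, p.eval (sin ψ * sin φ) =
      π / 2 * ∫ x in (0 : ℝ)..1, p.eval x := by
  have hc (q : Polynomial ℝ) :
      Continuous fun ψ : ℝ => sin ψ * ∫ φ in (0 : ℝ)..π / 2, q.eval (sin ψ * sin φ) :=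
    continuous_sin.mul
      (continuous_parametric_intervalIntegral_of_continuous' (by fun_prop) _ _)
  induction p using Polynomial.induction_on' with
  | add p q hp hq =>
    have h (ψ : ℝ) : ∫ φ in (0 : ℝ)..π / 2, (p + q).eval (sin ψ * sin φ) =
        (∫ φ in (0 : ℝ)..π / 2, p.eval (sin ψ * sin φ)) +
          ∫ φ in (0 : ℝ)..π / 2, q.eval (sin ψ * sin φ) := by
      simp only [Polynomial.eval_add]
      exact integral_add (Continuous.intervalIntegrable (by fun_prop) _ _)
        (Continuous.intervalIntegrable (by fun_prop) _ _)
    simp only [h, mul_add]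
    rw [integral_add ((hc p).intervalIntegrable _ _) ((hc q).intervalIntegrable _ _), hp, hq]
    simp only [Polynomial.eval_add]
    rw [integral_add (Continuous.intervalIntegrable (by fun_prop) _ _)
        (Continuous.intervalIntegrable (by fun_prop) _ _), mul_add]
  | monomial n a =>
    have hW := integral_sin_pow_mul_integral_sin_pow_succ n
    simp only [Polynomial.eval_monomial, mul_pow, integral_const_mul, integral_pow]
    calc _ = ∫ ψ in (0 : ℝ)..π / 2,
          (a * ∫ φ in (0 : ℝ)..π / 2, sin φ ^ n) * sin ψ ^ (n + 1) := by
          congr 1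
          ext ψ
          ring
      _ = a * ((∫ x in (0 : ℝ)..π / 2, sin x ^ n) *
            ∫ x in (0 : ℝ)..π / 2, sin x ^ (n + 1)) := by
          rw [integral_const_mul]
          ring
      _ = _ := by
          rw [hW]
          simp
          field_simp

/-- If the circular averages of `G` vanish at all radii at most `1`, so does its mean on
`[0, 1]`. -/
lemma integral_eq_zero_of_forall_integral_comp_mul_sin {G : ℝ → ℝ}
    (hG : ContinuousOn G (Set.Icc 0 1))
    (h : ∀ s ∈ Set.Ioc (0 : ℝ) 1, ∫ φ in (0 : ℝ)..π / 2, G (s * sin φ) = 0) :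
    ∫ x in (0 : ℝ)..1, G x = 0 := by
  have hpi : (0 : ℝ) ≤ π / 2 := by positivity
  have sin_mem {φ : ℝ} (hφ : φ ∈ Set.Ioc 0 (π / 2)) : sin φ ∈ Set.Ioc (0 : ℝ) 1 :=
    ⟨sin_pos_of_pos_of_lt_pi hφ.1 (by linarith [hφ.2, pi_pos]), sin_le_one φ⟩
  have key (ε : ℝ) (hε : 0 < ε) : |∫ x in (0 : ℝ)..1, G x| ≤ (1 + π / 2) * ε := by
    obtain ⟨p, hp⟩ := exists_polynomial_near_of_continuousOn 0 1 G hG ε hε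
    have hA (s : ℝ) (hs : s ∈ Set.Ioc (0 : ℝ) 1) :
        |∫ φ in (0 : ℝ)..π / 2, p.eval (s * sin φ)| ≤ ε * (π / 2) := by
      have hGs : ContinuousOn (fun φ => G (s * sin φ)) (Set.uIcc 0 (π / 2)) := by
        refine hG.comp (by fun_prop) fun φ hφ => ?_
        rw [Set.uIcc_of_le hpi] at hφ
        have h0 := sin_nonneg_of_nonneg_of_le_pi hφ.1 (by linarith [hφ.2, pi_pos])
        exact ⟨mul_nonneg hs.1.le h0, mul_le_one₀ hs.2 h0 (sin_le_one φ)⟩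
      have hsub := integral_sub (μ := MeasureTheory.volume)
        (Continuous.intervalIntegrable (u := fun φ => p.eval (s * sin φ)) (by fun_prop) 0 (π / 2))
        hGs.intervalIntegrable
      rw [h s hs, sub_zero] at hsub
      rw [← hsub]
      have := norm_integral_le_of_norm_le_const (a := 0) (b := π / 2) (C := ε)
        (f := fun φ => p.eval (s * sin φ) - G (s * sin φ)) fun φ hφ => by
          rw [Set.uIoc_of_le hpi] at hφ
          have h0 := sin_mem hφ
          exact (hp _ ⟨mul_nonneg hs.1.le h0.1.le, mul_le_one₀ hs.2 h0.1.le h0.2⟩).le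
      simpa [abs_of_nonneg hpi] using this
    have hB : |∫ ψ in (0 : ℝ)..π / 2, sin ψ * ∫ φ in (0 : ℝ)..π / 2, p.eval (sin ψ * sin φ)| ≤
        ε * (π / 2) * (π / 2) := by
      have := norm_integral_le_of_norm_le_const (a := 0) (b := π / 2) (C := ε * (π / 2))
        (f := fun ψ => sin ψ * ∫ φ in (0 : ℝ)..π / 2, p.eval (sin ψ * sin φ)) fun ψ hψ => by
          rw [Set.uIoc_of_le hpi] at hψ
          have h0 := sin_mem hψ
          rw [norm_mul, Real.norm_eq_abs, Real.norm_eq_abs, abs_of_pos h0.1]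
          exact (mul_le_of_le_one_left (abs_nonneg _) h0.2).trans (hA _ h0)
      simpa only [sub_zero, abs_of_nonneg hpi, Real.norm_eq_abs] using this
    rw [integral_sin_mul_integral_eval_sin_mul_sin, abs_mul, abs_of_nonneg hpi, mul_comm] at hB
    have hp1 : |∫ x in (0 : ℝ)..1, p.eval x| ≤ ε * (π / 2) :=
      le_of_mul_le_mul_right hB (by positivity)
    have hp2 : |(∫ x in (0 : ℝ)..1, p.eval x) - ∫ x in (0 : ℝ)..1, G x| ≤ ε := by
      rw [← integral_sub (Continuous.intervalIntegrable (by fun_prop) _ _)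
        (ContinuousOn.intervalIntegrable (by rwa [Set.uIcc_of_le zero_le_one]))]
      have := norm_integral_le_of_norm_le_const (a := 0) (b := 1) (C := ε)
        (f := fun x => p.eval x - G x) fun x hx => by
          rw [Set.uIoc_of_le zero_le_one] at hx
          exact (hp _ ⟨hx.1.le, hx.2⟩).le
      simpa using this
    rw [abs_le] at hp1 hp2 ⊢
    constructor <;> linarith [hp1.1, hp1.2, hp2.1, hp2.2]
  have hlim : |∫ x in (0 : ℝ)..1, G x| ≤ 0 := by
    refine le_of_forall_pos_le_add fun δ hδ => ?_
    have := key (δ / (1 + π / 2)) (by positivity)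
    rwa [mul_div_cancel₀ _ (by positivity), ← zero_add δ] at this
  exact abs_nonpos_iff.mp hlim

/-- The substitution `cos ϑ = r sin φ` removes the endpoint singularity of the Leray average. -/
lemma integral_div_sqrt_sq_sub_cos_sq (P : ℝ → ℝ) {r : ℝ} (hr : r ∈ Set.Ioo (0 : ℝ) 1) :
    ∫ ϑ in arccos r..(π / 2), P (cos ϑ ^ 2) / √(r ^ 2 - cos ϑ ^ 2) =
      ∫ φ in (0 : ℝ)..π / 2, P ((r * sin φ) ^ 2) / √(1 - (r * sin φ) ^ 2) := by
  obtain ⟨hr0, hr1⟩ := hr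
  have hpi := pi_pos
  have mem {φ : ℝ} (hφ : φ ∈ Set.Ioo 0 (π / 2)) : 0 < r * sin φ ∧ r * sin φ < r := by
    have h0 := sin_pos_of_pos_of_lt_pi hφ.1 (by linarith [hφ.2])
    have h1 : sin φ < 1 := by
      rw [← sin_pi_div_two]
      exact sin_lt_sin_of_lt_of_le_pi_div_two (by linarith [hφ.1]) le_rfl hφ.2
    exact ⟨mul_pos hr0 h0, mul_lt_of_lt_one_right hr0 h1⟩
  have himage : (fun φ => arccos (r * sin φ)) '' Set.Ioo 0 (π / 2) =
      Set.Ioo (arccos r) (π / 2) := by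
    ext ϑ
    constructor
    · rintro ⟨φ, hφ, rfl⟩
      obtain ⟨h0, h1⟩ := mem hφ
      exact ⟨arccos_lt_arccos (by linarith) h1 hr1.le, arccos_lt_pi_div_two.mpr h0⟩
    · rintro ⟨h1, h2⟩
      have hϑ : 0 ≤ ϑ := (arccos_nonneg r).trans h1.le
      have hc0 : 0 < cos ϑ := cos_pos_of_mem_Ioo ⟨by linarith, h2⟩
      have hc1 : cos ϑ < r := by
        rw [← cos_arccos (by linarith : -1 ≤ r) hr1.le]
        exact cos_lt_cos_of_nonneg_of_le_pi (arccos_nonneg r) (by linarith) h1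
      have hq0 : 0 < cos ϑ / r := div_pos hc0 hr0
      have hq1 : cos ϑ / r < 1 := (div_lt_one hr0).mpr hc1
      refine ⟨arcsin (cos ϑ / r), ⟨arcsin_pos.mpr hq0, arcsin_lt_pi_div_two.mpr hq1⟩, ?_⟩
      simp only
      rw [sin_arcsin (by linarith) hq1.le, mul_div_cancel₀ _ hr0.ne',
        arccos_cos hϑ (by linarith)]
  have hderiv : ∀ φ ∈ Set.Ioo 0 (π / 2), HasDerivWithinAt (fun φ => arccos (r * sin φ))
      (-(1 / √(1 - (r * sin φ) ^ 2)) * (r * cos φ)) (Set.Ioo 0 (π / 2)) φ := fun φ hφ => by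
    obtain ⟨h0, h1⟩ := mem hφ
    exact ((hasDerivAt_arccos (by linarith) (by linarith)).comp φ
      ((hasDerivAt_sin φ).const_mul r)).hasDerivWithinAt
  have hinj : Set.InjOn (fun φ => arccos (r * sin φ)) (Set.Ioo 0 (π / 2)) := by
    intro φ hφ χ hχ heq
    obtain ⟨h0, h1⟩ := mem hφ
    obtain ⟨hχ0, hχ1⟩ := mem hχ
    have := arccos_injOn ⟨by linarith, by linarith⟩ ⟨by linarith, by linarith⟩ heq
    exact injOn_sin ⟨by linarith [hφ.1], hφ.2.le⟩ ⟨by linarith [hχ.1], hχ.2.le⟩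
      (mul_left_cancel₀ hr0.ne' this)
  rw [integral_of_le (arccos_le_pi_div_two.mpr hr0.le), integral_of_le (by positivity),
    MeasureTheory.integral_Ioc_eq_integral_Ioo, MeasureTheory.integral_Ioc_eq_integral_Ioo,
    ← himage, MeasureTheory.integral_image_eq_integral_abs_deriv_smul measurableSet_Ioo hderiv hinj]
  refine MeasureTheory.setIntegral_congr_fun measurableSet_Ioo fun φ hφ => ?_
  obtain ⟨h0, h1⟩ := mem hφ
  have hcos : 0 < cos φ := cos_pos_of_mem_Ioo ⟨by linarith [hφ.1], hφ.2⟩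
  have hsqrt : 0 < √(1 - (r * sin φ) ^ 2) := sqrt_pos.mpr (by nlinarith)
  have hroot : √(r ^ 2 - (r * sin φ) ^ 2) = r * cos φ := by
    rw [← sqrt_sq (mul_pos hr0 hcos).le]
    congr 1
    rw [mul_pow, mul_pow, cos_sq']
    ring
  simp only [smul_eq_mul]
  rw [cos_arccos (by linarith) (by linarith), hroot, neg_mul, abs_neg, abs_of_pos (by positivity)]
  field_simp

/-- Vanishing of the Leray averages over all invariant curves inside the
separatrix forces the symmetric variation to vanish. -/
theorem inside_separatrix_rigidity
    (P : ℝ → ℝ) (hP : ContinuousOn P (Set.Icc 0 1))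
    (h : ∀ α ∈ Set.Ioc (0 : ℝ) 1,
      ∫ ϑ in Real.arccos (Real.sqrt α)..(π / 2),
        P (Real.cos ϑ ^ 2) / Real.sqrt (α - Real.cos ϑ ^ 2) = 0) :
    ∀ t ∈ Set.Icc (0 : ℝ) 1, P t = 0 := by
  set g : ℝ → ℝ := fun y => P (y ^ 2) / √(1 - y ^ 2) with hg
  have hgc : ContinuousOn g (Set.Ico 0 1) := by
    refine ContinuousOn.div (hP.comp (by fun_prop) fun y hy => ?_) (by fun_prop) fun y hy => ?_
    · exact ⟨sq_nonneg y, by nlinarith [hy.1, hy.2]⟩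
    · exact (sqrt_pos.mpr (by nlinarith [hy.1, hy.2])).ne'
  have hcirc (r : ℝ) (hr : r ∈ Set.Ioo (0 : ℝ) 1) :
      ∫ φ in (0 : ℝ)..π / 2, g (r * sin φ) = 0 := by
    have hr2 := h (r ^ 2) ⟨pow_pos hr.1 2, by nlinarith [hr.1, hr.2]⟩
    rwa [sqrt_sq hr.1.le, integral_div_sqrt_sq_sub_cos_sq P hr] at hr2
  have hprim (r : ℝ) (hr : r ∈ Set.Ioo (0 : ℝ) 1) : ∫ y in (0 : ℝ)..r, g y = 0 := by
    have hmean : ∫ x in (0 : ℝ)..1, g (r * x) = 0 := by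
      refine integral_eq_zero_of_forall_integral_comp_mul_sin
        (hgc.comp (by fun_prop) fun x hx => ?_) fun s hs => ?_
      · exact ⟨mul_nonneg hr.1.le hx.1, by nlinarith [hr.1, hr.2, hx.1, hx.2]⟩
      · simp only [← mul_assoc]
        exact hcirc (r * s) ⟨mul_pos hr.1 hs.1, by nlinarith [hr.1, hr.2, hs.1, hs.2]⟩
    rw [integral_comp_mul_left _ hr.1.ne', mul_zero, mul_one, smul_eq_mul] at hmean
    exact (mul_eq_zero.mp hmean).resolve_left (inv_ne_zero hr.1.ne')
  have hgzero (r : ℝ) (hr : r ∈ Set.Ioo (0 : ℝ) 1) : g r = 0 := by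
    have hopen : ContinuousOn g (Set.Ioo 0 1) := hgc.mono Set.Ioo_subset_Ico_self
    have hd : HasDerivAt (fun u => ∫ y in (0 : ℝ)..u, g y) (g r) r := by
      refine integral_hasDerivAt_right (ContinuousOn.intervalIntegrable (hgc.mono ?_))
        (hopen.stronglyMeasurableAtFilter isOpen_Ioo r hr)
        (hopen.continuousAt (Ioo_mem_nhds hr.1 hr.2))
      rw [Set.uIcc_of_le hr.1.le]
      exact fun y hy => ⟨hy.1, hy.2.trans_lt hr.2⟩
    refine hd.unique ((hasDerivAt_const r (0 : ℝ)).congr_of_eventuallyEq ?_)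
    filter_upwards [Ioo_mem_nhds hr.1 hr.2] with u hu using hprim u hu
  have hPzero : Set.EqOn P 0 (Set.Ioo 0 1) := fun t ht => by
    have hs := hgzero (√t) ⟨sqrt_pos.mpr ht.1, (sqrt_lt' one_pos).mpr (by simpa using ht.2)⟩
    simp only [hg, sq_sqrt ht.1.le] at hs
    exact (div_eq_zero_iff.mp hs).resolve_right (sqrt_pos.mpr (by linarith [ht.2])).ne'
  exact hPzero.of_subset_closure hP continuousOn_const Set.Ioo_subset_Icc_self
    (closure_Ioo zero_ne_one).ge
end

section
/- Let β > 1 and let f : (0,1) → ℝ be Lebesgue integrable. If ∫₀¹ f(u) (β − u)^{−n−1/2} du = 0 for every n ∈ ℕ, then f = 0 almost everywhere on (0,1). -/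
open Real MeasureTheory intervalIntegral

/-- If `F` is integrable on `[a, b]` and orthogonal to every power of a continuous function `φ`
that has a continuous left inverse `ψ`, then `F` is orthogonal to every continuous function. -/
lemma setIntegral_mul_eq_zero_of_forall_pow {a b c d : ℝ} {F φ ψ g : ℝ → ℝ}
    (hF : IntegrableOn F (Set.Icc a b)) (hφ : ContinuousOn φ (Set.Icc a b))
    (hmaps : Set.MapsTo φ (Set.Icc a b) (Set.Icc c d)) (hψ : ContinuousOn ψ (Set.Icc c d))
    (hinv : Set.LeftInvOn ψ φ (Set.Icc a b)) (hg : Continuous g)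
    (h : ∀ n : ℕ, ∫ u in Set.Icc a b, F u * φ u ^ n = 0) :
    ∫ u in Set.Icc a b, F u * g u = 0 := by
  have hpoly (p : Polynomial ℝ) : ∫ u in Set.Icc a b, F u * p.eval (φ u) = 0 := by
    simp_rw [Polynomial.eval_eq_sum_range, Finset.mul_sum, mul_left_comm (F _)]
    rw [MeasureTheory.integral_finsetSum]
    · simp [MeasureTheory.integral_const_mul, h]
    · exact fun n _ => (hF.mul_continuousOn (hφ.pow n) isCompact_Icc).const_mul _
  by_contra hne
  set C := ∫ u in Set.Icc a b, ‖F u‖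
  have hC : 0 ≤ C := integral_nonneg fun _ => norm_nonneg _
  have hpos : 0 < ‖∫ u in Set.Icc a b, F u * g u‖ := norm_pos_iff.mpr hne
  set I := ‖∫ u in Set.Icc a b, F u * g u‖
  obtain ⟨p, hp⟩ := exists_polynomial_near_of_continuousOn c d (g ∘ ψ)
    (hg.comp_continuousOn hψ) (I / (C + 1)) (by positivity)
  have hle : I ≤ I / (C + 1) * C := by
    have hpφ : ContinuousOn (fun u => p.eval (φ u)) (Set.Icc a b) :=
      p.continuous.comp_continuousOn hφ
    calc I = ‖∫ u in Set.Icc a b, (F u * g u - F u * p.eval (φ u))‖ := by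
          rw [MeasureTheory.integral_sub (hF.mul_continuousOn hg.continuousOn isCompact_Icc)
            (hF.mul_continuousOn hpφ isCompact_Icc), hpoly, sub_zero]
      _ ≤ ∫ u in Set.Icc a b, I / (C + 1) * ‖F u‖ := by
          refine norm_integral_le_of_norm_le (hF.norm.const_mul _) ?_
          refine ae_restrict_of_forall_mem measurableSet_Icc fun u hu => ?_
          have := hp (φ u) (hmaps hu)
          rw [Function.comp_apply, hinv hu, abs_sub_comm] at this
          rw [← mul_sub, norm_mul, mul_comm]
          exact mul_le_mul_of_nonneg_right this.le (norm_nonneg _)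
      _ = I / (C + 1) * C := MeasureTheory.integral_const_mul _ _
  rw [div_mul_eq_mul_div, le_div_iff₀ (by positivity)] at hle
  linarith

/-- If all the moments `∫₀¹ f(u)(β − u)^{−n−1/2} du` of an integrable function
vanish for some `β > 1`, then `f = 0` a.e. on `(0,1)`. -/
theorem moments_vanish_implies_zero
    (β : ℝ) (hβ : 1 < β) (f : ℝ → ℝ) (hf : IntegrableOn f (Set.Ioo 0 1))
    (h : ∀ n : ℕ, ∫ u in (0:ℝ)..1, f u * (β - u) ^ (-(n : ℝ) - 1/2) = 0) :
    ∀ᵐ u ∂(volume.restrict (Set.Ioo (0:ℝ) 1)), f u = 0 := by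
  have hpos : ∀ u ∈ Set.Icc (0:ℝ) 1, 0 < β - u := fun u hu => by linarith [hu.2]
  have hsub : ContinuousOn (fun u => β - u) (Set.Icc (0:ℝ) 1) := by fun_prop
  have hF : IntegrableOn (fun u => f u * (β - u) ^ (-(1/2) : ℝ)) (Set.Icc (0:ℝ) 1) :=
    ((integrableOn_Icc_iff_integrableOn_Ioo).mpr hf).mul_continuousOn
      (hsub.rpow_const fun u hu => Or.inl (hpos u hu).ne') isCompact_Icc
  have hmoment (n : ℕ) :
      ∫ u in Set.Icc (0:ℝ) 1, f u * (β - u) ^ (-(1/2) : ℝ) * (β - u)⁻¹ ^ n = 0 := by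
    refine Eq.trans ?_ (h n)
    rw [integral_of_le zero_le_one, ← integral_Icc_eq_integral_Ioc]
    refine setIntegral_congr_fun measurableSet_Icc fun u hu => ?_
    have hu := hpos u hu
    rw [mul_assoc, inv_pow, ← rpow_natCast, ← rpow_neg hu.le, ← rpow_add hu]
    ring_nf
  have hβ' : 0 < β - 1 := by linarith
  have horth (g : ℝ → ℝ) (hg : Continuous g) :
      ∫ u in Set.Icc (0:ℝ) 1, f u * (β - u) ^ (-(1/2) : ℝ) * g u = 0 := by
    refine setIntegral_mul_eq_zero_of_forall_pow (φ := fun u => (β - u)⁻¹)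
      (ψ := fun t => β - t⁻¹) (c := β⁻¹) (d := (β - 1)⁻¹) hF
      (hsub.inv₀ fun u hu => (hpos u hu).ne') (fun u hu => ⟨?_, ?_⟩) ?_ (fun u _ => by simp)
      hg hmoment
    · exact inv_anti₀ (hpos u hu) (by linarith [hu.1])
    · exact inv_anti₀ hβ' (by linarith [hu.2])
    · refine continuousOn_const.sub (continuousOn_inv₀.mono fun t ht => ?_)
      exact ((inv_pos.mpr (by linarith)).trans_le ht.1).ne'
  have hzero := isOpen_Ioo.ae_eq_zero_of_integral_contDiff_smul_eq_zero
    (hF.mono_set Set.Ioo_subset_Icc_self).locallyIntegrableOn fun g hg _ hsupp => by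
      rw [← horth g hg.continuous, ← setIntegral_eq_integral_of_forall_compl_eq_zero]
      · exact setIntegral_congr_fun measurableSet_Icc fun u _ => mul_comm _ _
      · intro u hu
        have : u ∉ tsupport g := fun hu' => hu (Set.Ioo_subset_Icc_self (hsupp hu'))
        simp [image_eq_zero_of_notMem_tsupport this]
  rw [ae_restrict_iff' measurableSet_Ioo]
  filter_upwards [hzero] with u hu hmem
  exact (mul_eq_zero.mp (hu hmem)).resolve_right
    (rpow_pos_of_pos (hpos u (Set.Ioo_subset_Icc_self hmem)) _).ne'
end

section
/- Let β > 1 and let P : ℝ → ℝ be continuous on [0,1]. Suppose that for every α ∈ (1, β], ∫₀^{π/2} P(cos²ϑ) / √(α − cos²ϑ) dϑ = 0. Then P(t) = 0 for every t ∈ [0,1]. -/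
open Real intervalIntegral

theorem continuous_sub_rpow {c : ℝ → ℝ} {m x : ℝ} (hc : Continuous c) (hcm : ∀ t, c t ≤ m)
    (hx : m < x) (r : ℝ) : Continuous fun t => (x - c t) ^ r :=
  (continuous_const.sub hc).rpow_const fun t =>
    Or.inl (sub_pos.2 ((hcm t).trans_lt hx)).ne'

theorem hasDerivAt_integral_mul_sub_rpow {g c : ℝ → ℝ} {m x r : ℝ} (a b : ℝ)
    (hg : Continuous g) (hc : Continuous c) (hcm : ∀ t, c t ≤ m) (hx : m < x) (hr : r ≤ 0) :
    HasDerivAt (fun y => ∫ t in a..b, g t * (y - c t) ^ r)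
      (r * ∫ t in a..b, g t * (x - c t) ^ (r - 1)) x := by
  obtain ⟨z, hmz, hzx⟩ := exists_between hx
  rw [← integral_const_mul]
  have hpos : ∀ t, ∀ y ∈ Set.Ioi z, 0 < y - c t := fun t y hy =>
    sub_pos.2 (((hcm t).trans_lt hmz).trans hy)
  have hcont : ∀ y, m < y → ∀ s : ℝ, Continuous fun t => g t * (y - c t) ^ s := fun y hy s =>
    hg.mul (continuous_sub_rpow hc hcm hy s)
  refine (hasDerivAt_integral_of_dominated_loc_of_deriv_le (s := Set.Ioi z)
    (F := fun y t => g t * (y - c t) ^ r) (F' := fun y t => r * (g t * (y - c t) ^ (r - 1)))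
    (bound := fun t => |r| * (|g t| * (z - m) ^ (r - 1)))
    (Ioi_mem_nhds hzx) ?_ ((hcont x hx r).intervalIntegrable _ _) ?_ ?_ ?_ ?_).2
  · filter_upwards [Ioi_mem_nhds hx] with y hy
    exact (hcont y hy r).aestronglyMeasurable
  · exact (continuous_const.mul (hcont x hx (r - 1))).aestronglyMeasurable
  · refine Filter.Eventually.of_forall fun t _ y hy => ?_
    rw [norm_mul, norm_mul, Real.norm_eq_abs, Real.norm_eq_abs, Real.norm_eq_abs,
      abs_of_pos (rpow_pos_of_pos (hpos t y hy) _)]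
    gcongr |r| * (|g t| * ?_)
    have hy' : z < y := hy
    exact rpow_le_rpow_of_nonpos (sub_pos.2 hmz) (by linarith [hcm t]) (by linarith)
  · exact (continuous_const.mul (hg.abs.mul continuous_const)).intervalIntegrable _ _
  · refine Filter.Eventually.of_forall fun t _ y hy => ?_
    refine ((((hasDerivAt_id y).sub_const (c t)).rpow_const (p := r)
      (Or.inl (hpos t y hy).ne')).const_mul (g t)).congr_deriv ?_
    simp only [id]
    ring

theorem integral_mul_sub_rpow_eq_zero {g c : ℝ → ℝ} {m M a b r : ℝ}
    (hg : Continuous g) (hc : Continuous c) (hcm : ∀ t, c t ≤ m) (hr : r < 0)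
    (h : ∀ x ∈ Set.Ioo m M, ∫ t in a..b, g t * (x - c t) ^ r = 0) (n : ℕ) :
    ∀ x ∈ Set.Ioo m M, ∫ t in a..b, g t * (x - c t) ^ (r - n) = 0 := by
  induction n with
  | zero => simpa using h
  | succ n ih =>
    intro x hx
    have hneg : r - n < 0 := by linarith [(Nat.cast_nonneg n : (0 : ℝ) ≤ n)]
    have hzero : HasDerivAt (fun y => ∫ t in a..b, g t * (y - c t) ^ (r - n)) 0 x :=
      (hasDerivAt_const x (0 : ℝ)).congr_of_eventuallyEq <| by
        filter_upwards [Ioo_mem_nhds hx.1 hx.2] with y hy using ih y hy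
    have hprod := (hasDerivAt_integral_mul_sub_rpow a b hg hc hcm hx.1 hneg.le).unique hzero
    rw [Nat.cast_succ, ← sub_sub]
    exact (mul_eq_zero.1 hprod).resolve_left hneg.ne

/-- If all moments `∫ k * w ^ n` vanish, then so does `∫ k * (f ∘ w)` for `f` continuous. -/
theorem integral_mul_comp_eq_zero_of_moments {k w f : ℝ → ℝ} {a b p q : ℝ} (hab : a ≤ b)
    (hk : Continuous k) (hw : Continuous w) (hwpq : ∀ t, w t ∈ Set.Icc p q)
    (hf : ContinuousOn f (Set.Icc p q))
    (h : ∀ n : ℕ, ∫ t in a..b, k t * w t ^ n = 0) :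
    ∫ t in a..b, k t * f (w t) = 0 := by
  have hpoly : ∀ s : Polynomial ℝ, ∫ t in a..b, k t * s.eval (w t) = 0 := by
    intro s
    simp_rw [Polynomial.eval_eq_sum_range, Finset.mul_sum, mul_left_comm (k _)]
    rw [integral_finsetSum]
    · simp [h]
    · exact fun i _ => Continuous.intervalIntegrable (by fun_prop) _ _
  have hfw : Continuous fun t => f (w t) := hf.comp_continuous hw hwpq
  have hC : 0 ≤ ∫ t in a..b, |k t| := integral_nonneg hab fun t _ => abs_nonneg _
  refine abs_eq_zero.1 (le_antisymm (le_of_forall_pos_le_add fun ε hε => ?_) (abs_nonneg _))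
  set C := ∫ t in a..b, |k t|
  obtain ⟨s, hs⟩ := exists_polynomial_near_of_continuousOn p q f hf (ε / (C + 1)) (by positivity)
  have hsw : Continuous fun t => s.eval (w t) := s.continuous.comp hw
  have hdiff : ∫ t in a..b, k t * f (w t) = ∫ t in a..b, k t * (f (w t) - s.eval (w t)) := by
    simp_rw [mul_sub]
    rw [integral_sub, hpoly, sub_zero]
    exacts [(hk.mul hfw).intervalIntegrable _ _, (hk.mul hsw).intervalIntegrable _ _]
  calc |∫ t in a..b, k t * f (w t)|
      ≤ ∫ t in a..b, |k t * (f (w t) - s.eval (w t))| := by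
        rw [hdiff]; exact abs_integral_le_integral_abs hab
    _ ≤ ∫ t in a..b, |k t| * (ε / (C + 1)) := by
        refine integral_mono_on hab ((hk.mul (hfw.sub hsw)).abs.intervalIntegrable _ _)
          ((hk.abs.mul continuous_const).intervalIntegrable _ _) fun t _ => ?_
        rw [abs_mul, abs_sub_comm]
        gcongr
        exact (hs _ (hwpq t)).le
    _ = C * (ε / (C + 1)) := integral_mul_const _ _
    _ ≤ 0 + ε := by
        rw [zero_add, mul_div_assoc', div_le_iff₀ (by positivity)]
        nlinarith

theorem eq_zero_of_integral_div_sqrt_eq_zero {β : ℝ} (hβ : 1 < β) {Q : ℝ → ℝ} (hQ : Continuous Q)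
    (h : ∀ α ∈ Set.Ioo (1 : ℝ) β,
      ∫ ϑ in (0 : ℝ)..(π / 2), Q (cos ϑ ^ 2) / √(α - cos ϑ ^ 2) = 0)
    {ϑ : ℝ} (hϑ : ϑ ∈ Set.Icc 0 (π / 2)) : Q (cos ϑ ^ 2) = 0 := by
  obtain ⟨α, hα⟩ := exists_between hβ
  have hc : Continuous fun t => cos t ^ 2 := continuous_cos.pow 2
  have hg : Continuous fun t => Q (cos t ^ 2) := hQ.comp hc
  have hpos : ∀ t, ∀ x, 1 < x → 0 < x - cos t ^ 2 := fun t x hx =>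
    sub_pos.2 ((cos_sq_le_one t).trans_lt hx)
  have hr := integral_mul_sub_rpow_eq_zero (r := -(1 / 2)) (a := 0) (b := π / 2) (M := β)
    hg hc cos_sq_le_one (by norm_num) fun x hx => by
      refine Eq.trans (integral_congr fun t _ => ?_) (h x hx)
      simp only [rpow_neg (hpos t x hx.1).le, sqrt_eq_rpow, div_eq_mul_inv]
  have hkc := continuous_sub_rpow hc cos_sq_le_one hα.1 (-(1 / 2))
  have hint : ∫ t in (0 : ℝ)..(π / 2), (Q (cos t ^ 2) * (α - cos t ^ 2) ^ (-(1 / 2) : ℝ)) *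
      (fun s => Q (α - s⁻¹)) (α - cos t ^ 2)⁻¹ = 0 := by
    refine integral_mul_comp_eq_zero_of_moments (f := fun s => Q (α - s⁻¹)) (w := fun t => (α - cos t ^ 2)⁻¹)
      (p := α⁻¹) (q := (α - 1)⁻¹) (by positivity) (hg.mul hkc) ((continuous_const.sub hc).inv₀ fun t => (hpos t α hα.1).ne')
      (fun t => ⟨?_, ?_⟩) ?_ fun n => ?_
    · exact inv_anti₀ (hpos t α hα.1) (by linarith [sq_nonneg (cos t)])
    · exact inv_anti₀ (by linarith [hα.1]) (by linarith [cos_sq_le_one t])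
    · refine hQ.comp_continuousOn (continuousOn_const.sub (continuousOn_id.inv₀ fun s hs => ?_))
      exact ((inv_pos.2 (by linarith [hα.1])).trans_le hs.1).ne'
    · refine Eq.trans (integral_congr fun t _ => ?_) (hr n α hα)
      simp only [rpow_sub_natCast (hpos t α hα.1).ne', inv_pow, div_eq_mul_inv, mul_assoc]
  simp only [inv_inv, sub_sub_cancel] at hint
  by_contra hne
  refine (integral_pos (by positivity) ((hg.mul hkc).mul hg).continuousOn (fun t _ => ?_)
    ⟨ϑ, hϑ, ?_⟩).ne' hint
  · have := rpow_pos_of_pos (hpos t α hα.1) (-(1 / 2))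
    rw [mul_right_comm]
    exact mul_nonneg (mul_self_nonneg _) this.le
  · have := rpow_pos_of_pos (hpos ϑ α hα.1) (-(1 / 2))
    rw [mul_right_comm]
    exact mul_pos (mul_self_pos.2 hne) this

/-- Vanishing of the Leray averages over all invariant curves outside the
separatrix (for `1 < α ≤ β`) forces the symmetric variation to vanish. -/
theorem outside_separatrix_rigidity
    (β : ℝ) (hβ : 1 < β) (P : ℝ → ℝ) (hP : ContinuousOn P (Set.Icc 0 1))
    (h : ∀ α ∈ Set.Ioc (1 : ℝ) β,
      ∫ ϑ in (0:ℝ)..(π / 2),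
        P (Real.cos ϑ ^ 2) / Real.sqrt (α - Real.cos ϑ ^ 2) = 0) :
    ∀ t ∈ Set.Icc (0 : ℝ) 1, P t = 0 := by
  intro t ht
  let Q : ℝ → ℝ := fun s => P (Set.projIcc 0 1 zero_le_one s)
  have hQ : Continuous Q := hP.comp_continuous
    (continuous_subtype_val.comp continuous_projIcc) fun s => Subtype.prop _
  have hQP : ∀ s ∈ Set.Icc (0 : ℝ) 1, Q s = P s := fun s hs => by
    simp only [Q, Set.projIcc_of_mem zero_le_one hs]
  have hcos : cos (arccos √t) ^ 2 = t := by
    rw [cos_arccos (by linarith [sqrt_nonneg t]) (sqrt_le_one.2 ht.2), sq_sqrt ht.1]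
  rw [← hQP t ht, ← hcos]
  refine eq_zero_of_integral_div_sqrt_eq_zero hβ hQ (fun α hα => ?_)
    ⟨arccos_nonneg _, arccos_le_pi_div_two.2 (sqrt_nonneg t)⟩
  refine Eq.trans (integral_congr fun ϑ _ => ?_) (h α ⟨hα.1, hα.2.le⟩)
  simp only [hQP _ ⟨sq_nonneg (cos ϑ), cos_sq_le_one ϑ⟩]
end

section
/- Let a > b > 0, c = √(a² − b²), and β = a²/c². Let r : ℝ → ℝ be continuous, 2π-periodic, even (r(−ϑ) = r(ϑ) for all ϑ), and satisfying r(π − ϑ) = r(ϑ) for all ϑ. Suppose that for every α ∈ (0,1), ∫_{{ϑ ∈ [0,2π) : cos²ϑ < α}} r(ϑ) · (β − cos²ϑ)^{−1/2} · (α − cos²ϑ)^{−1/2} dϑ = 0. Then r(ϑ) = 0 for every ϑ. -/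
open Real MeasureTheory

lemma rpow_neg_half_of_nonpos {x : ℝ} (hx : x ≤ 0) : x ^ (-(1/2 : ℝ)) = 0 := by
  rcases hx.eq_or_lt with rfl | hx
  · exact Real.zero_rpow (by norm_num)
  · rw [Real.rpow_def_of_neg hx, show -(1/2 : ℝ) * π = -(π / 2) by ring, Real.cos_neg,
      Real.cos_pi_div_two, mul_zero]

lemma hasDerivAt_arcsin_affine {x γ α : ℝ} (hα : α ∈ Set.Ioo x γ) :
    HasDerivAt (fun t => Real.arcsin ((2 * t - x - γ) / (γ - x)))
      ((γ - α) ^ (-(1/2 : ℝ)) * (α - x) ^ (-(1/2 : ℝ))) α := by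
  obtain ⟨h1, h2⟩ := hα
  have hd : 0 < γ - x := by linarith
  have hA : 0 < α - x := by linarith
  have hB : 0 < γ - α := by linarith
  have hlin : HasDerivAt (fun t : ℝ => (2 * t - x - γ) / (γ - x)) (2 / (γ - x)) α := by
    simpa using ((((hasDerivAt_id α).const_mul 2).sub_const x).sub_const γ).div_const (γ - x)
  have hne1 : (2 * α - x - γ) / (γ - x) ≠ -1 := by
    intro h
    rw [div_eq_iff hd.ne'] at h
    linarith
  have hne2 : (2 * α - x - γ) / (γ - x) ≠ 1 := by
    intro h
    rw [div_eq_iff hd.ne'] at h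
    linarith
  refine ((Real.hasDerivAt_arcsin hne1 hne2).comp α hlin).congr_deriv ?_
  have hsq : 1 - ((2 * α - x - γ) / (γ - x)) ^ 2
      = (2 / (γ - x)) ^ 2 * ((γ - α) * (α - x)) := by
    field_simp
    ring
  rw [hsq, Real.sqrt_mul (by positivity), Real.sqrt_sq (by positivity), Real.sqrt_mul hB.le,
    Real.rpow_neg hB.le, Real.rpow_neg hA.le, ← Real.sqrt_eq_rpow, ← Real.sqrt_eq_rpow]
  have := Real.sqrt_pos.2 hA
  have := Real.sqrt_pos.2 hB
  field_simp

lemma integrableOn_Ioc_abel_kernel (x γ : ℝ) :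
    IntegrableOn (fun α : ℝ => (γ - α) ^ (-(1/2 : ℝ)) * (α - x) ^ (-(1/2 : ℝ)))
      (Set.Ioc x γ) := by
  refine intervalIntegral.integrableOn_deriv_of_nonneg
    (g := fun t => Real.arcsin ((2 * t - x - γ) / (γ - x))) (by fun_prop)
    (fun α hα => hasDerivAt_arcsin_affine hα) fun α hα => ?_
  have := hα.1
  have := hα.2
  exact mul_nonneg (Real.rpow_nonneg (by linarith) _) (Real.rpow_nonneg (by linarith) _)

lemma abel_kernel_eq_zero {x γ α : ℝ} (hα : α ∉ Set.Ioc x γ) :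
    (γ - α) ^ (-(1/2 : ℝ)) * (α - x) ^ (-(1/2 : ℝ)) = 0 := by
  rw [Set.mem_Ioc, not_and_or, not_lt, not_le] at hα
  rcases hα with h | h
  · rw [rpow_neg_half_of_nonpos (sub_nonpos.2 h), mul_zero]
  · rw [rpow_neg_half_of_nonpos (sub_nonpos.2 h.le), zero_mul]

lemma abel_kernel_nonneg (x γ α : ℝ) :
    0 ≤ (γ - α) ^ (-(1/2 : ℝ)) * (α - x) ^ (-(1/2 : ℝ)) := by
  by_cases hα : α ∈ Set.Ioc x γ
  · exact mul_nonneg (Real.rpow_nonneg (sub_nonneg.2 hα.2) _)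
      (Real.rpow_nonneg (sub_nonneg.2 hα.1.le) _)
  · rw [abel_kernel_eq_zero hα]

lemma integrable_abel_kernel (x γ : ℝ) :
    Integrable (fun α : ℝ => (γ - α) ^ (-(1/2 : ℝ)) * (α - x) ^ (-(1/2 : ℝ))) := by
  exact (integrableOn_Ioc_abel_kernel x γ).integrable_of_forall_notMem_eq_zero
    fun α hα => abel_kernel_eq_zero hα

lemma integral_abel_kernel_s7 (x γ : ℝ) :
    ∫ α : ℝ, (γ - α) ^ (-(1/2 : ℝ)) * (α - x) ^ (-(1/2 : ℝ)) = if x < γ then π else 0 := by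
  split_ifs with hx
  · rw [← setIntegral_eq_integral_of_forall_compl_eq_zero
      (s := Set.Ioc x γ) fun α hα => abel_kernel_eq_zero hα,
      ← intervalIntegral.integral_of_le hx.le,
      intervalIntegral.integral_eq_sub_of_hasDerivAt_of_le hx.le
        (f := fun t => Real.arcsin ((2 * t - x - γ) / (γ - x))) (by fun_prop)
        (fun α hα => hasDerivAt_arcsin_affine hα)
        ((intervalIntegrable_iff_integrableOn_Ioc_of_le hx.le).2
          (integrableOn_Ioc_abel_kernel x γ))]
    have hd : γ - x ≠ 0 := by linarith
    have e1 : (2 * γ - x - γ) / (γ - x) = 1 := by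
      rw [div_eq_one_iff_eq hd]
      ring
    have e2 : (2 * x - x - γ) / (γ - x) = -1 := by
      rw [div_eq_iff hd]
      ring
    rw [e1, e2, Real.arcsin_one, Real.arcsin_neg_one]
    ring
  · refine integral_eq_zero_of_ae (Filter.Eventually.of_forall fun α => ?_)
    exact abel_kernel_eq_zero (by simp [Set.Ioc_eq_empty hx])

/-- Composing the Abel transform of `g`, in the variable `q`, with the Abel kernel again gives
`π` times the integral of `g` over the sublevel set `{q < γ}`. -/
lemma integral_abel_transform {X : Type*} [MeasurableSpace X] {μ : Measure X} [SFinite μ]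
    {g q : X → ℝ} (hg : Integrable g μ) (hq : Measurable q) (γ : ℝ) :
    ∫ α : ℝ, (γ - α) ^ (-(1/2 : ℝ)) * ∫ θ, g θ * (α - q θ) ^ (-(1/2 : ℝ)) ∂μ
      = ∫ θ, g θ * (if q θ < γ then π else 0) ∂μ := by
  have hint : Integrable (fun p : ℝ × X =>
      g p.2 * ((γ - p.1) ^ (-(1/2 : ℝ)) * (p.1 - q p.2) ^ (-(1/2 : ℝ)))) (volume.prod μ) := by
    have hmeas : AEStronglyMeasurable (fun p : ℝ × X =>
        g p.2 * ((γ - p.1) ^ (-(1/2 : ℝ)) * (p.1 - q p.2) ^ (-(1/2 : ℝ)))) (volume.prod μ) := by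
      refine hg.aestronglyMeasurable.comp_snd.mul (Measurable.aestronglyMeasurable ?_)
      fun_prop
    rw [integrable_prod_iff' hmeas]
    refine ⟨Filter.Eventually.of_forall fun θ =>
      (integrable_abel_kernel (q θ) γ).const_mul (g θ), ?_⟩
    simp only [norm_mul (g _), Real.norm_of_nonneg (abel_kernel_nonneg _ _ _)]
    simp only [integral_const_mul, integral_abel_kernel_s7]
    refine hg.norm.mul_bdd (c := π) (Measurable.aestronglyMeasurable ?_)
      (Filter.Eventually.of_forall fun θ => ?_)
    · exact Measurable.ite (measurableSet_lt hq measurable_const) measurable_const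
        measurable_const
    · split_ifs <;> simp [abs_of_pos Real.pi_pos, Real.pi_pos.le]
  have hswap := integral_integral_swap (f := fun α θ =>
    g θ * ((γ - α) ^ (-(1/2 : ℝ)) * (α - q θ) ^ (-(1/2 : ℝ)))) hint
  simp only [integral_const_mul, integral_abel_kernel_s7] at hswap
  rw [← hswap]
  congr 1
  funext α
  rw [← integral_const_mul]
  congr 1
  funext θ
  ring

lemma integral_zero_two_pi_of_symmetric {w : ℝ → ℝ}
    (hw : ∀ s t, IntervalIntegrable w volume s t)
    (heven : ∀ θ, w (-θ) = w θ) (hsym : ∀ θ, w (π - θ) = w θ) :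
    ∫ θ in (0 : ℝ)..(2 * π), w θ = 4 * ∫ θ in (0 : ℝ)..(π / 2), w θ := by
  have hper : ∀ θ, w (θ + π) = w θ := fun θ => by
    rw [← heven θ, ← hsym (-θ)]
    congr 1
    ring
  have h1 : ∫ θ in π..(2 * π), w θ = ∫ θ in (0 : ℝ)..π, w θ := by
    have := intervalIntegral.integral_comp_add_right (a := 0) (b := π) w π
    simp only [hper] at this
    rw [this]
    congr 1 <;> ring
  have h2 : ∫ θ in (π / 2)..π, w θ = ∫ θ in (0 : ℝ)..(π / 2), w θ := by
    have := intervalIntegral.integral_comp_sub_left (a := 0) (b := π / 2) w π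
    simp only [hsym] at this
    rw [this]
    congr 1 <;> ring
  rw [← intervalIntegral.integral_add_adjacent_intervals (hw 0 π) (hw π (2 * π)), h1,
    ← intervalIntegral.integral_add_adjacent_intervals (hw 0 (π / 2)) (hw (π / 2) π), h2]
  ring

/-- A continuous function with the symmetries of the ellipse is determined on `(0, π / 2)` by its
integrals over the sets `{cos² < γ}`. -/
lemma eq_zero_of_integral_sublevel_cos_sq {g : ℝ → ℝ} (hg : Continuous g)
    (heven : ∀ θ, g (-θ) = g θ) (hsym : ∀ θ, g (π - θ) = g θ)
    (h : ∀ γ ∈ Set.Ioo (0 : ℝ) 1,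
      ∫ θ in (0 : ℝ)..(2 * π), g θ * (if Real.cos θ ^ 2 < γ then π else 0) = 0)
    {t : ℝ} (ht : t ∈ Set.Ioo 0 (π / 2)) : g t = 0 := by
  have hzero : ∀ s ∈ Set.Ioo 0 (π / 2), ∫ θ in s..(π / 2), g θ = 0 := by
    rintro s ⟨hs0, hs1⟩
    have hcpos : 0 < Real.cos s := Real.cos_pos_of_mem_Ioo ⟨by linarith, hs1⟩
    have hclt : Real.cos s < 1 := by
      rw [← Real.cos_zero]
      exact Real.cos_lt_cos_of_nonneg_of_le_pi le_rfl (by linarith [Real.pi_pos]) hs0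
    have hγ := h (Real.cos s ^ 2) ⟨by positivity, by nlinarith⟩
    set w : ℝ → ℝ := fun θ => g θ * (if Real.cos θ ^ 2 < Real.cos s ^ 2 then π else 0) with hw
    have hwint : ∀ u v, IntervalIntegrable w volume u v := by
      intro u v
      rw [intervalIntegrable_iff]
      refine (intervalIntegrable_iff.1 (hg.intervalIntegrable u v)).mul_bdd (c := π)
        (Measurable.aestronglyMeasurable ?_) (Filter.Eventually.of_forall fun θ => ?_)
      · exact Measurable.ite (measurableSet_lt (by fun_prop) measurable_const)
          measurable_const measurable_const
      · split_ifs <;> simp [abs_of_pos Real.pi_pos, Real.pi_pos.le]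
    rw [integral_zero_two_pi_of_symmetric hwint (fun θ => by simp [hw, heven])
      (fun θ => by simp [hw, hsym]),
      ← intervalIntegral.integral_add_adjacent_intervals (hwint 0 s) (hwint s (π / 2))] at hγ
    have e1 : ∫ θ in (0 : ℝ)..s, w θ = 0 := by
      refine intervalIntegral.integral_zero_ae (Filter.Eventually.of_forall fun θ hθ => ?_)
      rw [Set.uIoc_of_le hs0.le] at hθ
      have : Real.cos s ≤ Real.cos θ :=
        Real.cos_le_cos_of_nonneg_of_le_pi hθ.1.le (by linarith [Real.pi_pos]) hθ.2
      have hn : ¬ Real.cos θ ^ 2 < Real.cos s ^ 2 := by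
        rw [not_lt]
        gcongr
      simp [hw, hn]
    have e2 : ∫ θ in s..(π / 2), w θ = (∫ θ in s..(π / 2), g θ) * π := by
      rw [← intervalIntegral.integral_mul_const]
      refine intervalIntegral.integral_congr_ae (Filter.Eventually.of_forall fun θ hθ => ?_)
      rw [Set.uIoc_of_le hs1.le] at hθ
      have h1 : Real.cos θ < Real.cos s :=
        Real.cos_lt_cos_of_nonneg_of_le_pi hs0.le (by linarith [Real.pi_pos, hθ.2]) hθ.1
      have h2 : 0 ≤ Real.cos θ :=
        Real.cos_nonneg_of_mem_Icc ⟨by linarith [Real.pi_pos, hθ.1], hθ.2⟩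
      have hlt : Real.cos θ ^ 2 < Real.cos s ^ 2 := by gcongr
      simp [hw, hlt]
    rw [e1, e2] at hγ
    have := Real.pi_ne_zero
    simpa [this] using hγ
  have hder : HasDerivAt (fun s => ∫ θ in s..(π / 2), g θ) (-g t) t :=
    intervalIntegral.integral_hasDerivAt_left (hg.intervalIntegrable _ _)
      (hg.stronglyMeasurableAtFilter _ _) hg.continuousAt
  have hconst : (fun s => ∫ θ in s..(π / 2), g θ) =ᶠ[nhds t] fun _ => 0 := by
    filter_upwards [isOpen_Ioo.mem_nhds ht] with s hs using hzero s hs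
  simpa using hder.unique ((hasDerivAt_const t (0 : ℝ)).congr_of_eventuallyEq hconst)

/-- A continuous function with the symmetries of the ellipse that vanishes on `(0, π / 2)`
vanishes identically. -/
lemma eq_zero_of_eq_zero_on_quadrant {r : ℝ → ℝ} (hr : Continuous r)
    (heven : ∀ θ, r (-θ) = r θ) (hsym : ∀ θ, r (π - θ) = r θ)
    (h : ∀ θ ∈ Set.Ioo 0 (π / 2), r θ = 0) (θ : ℝ) : r θ = 0 := by
  have hper : Function.Periodic r π := fun θ => by
    rw [← heven θ, ← hsym (-θ)]
    congr 1
    ring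
  have hIcc : ∀ θ ∈ Set.Icc 0 (π / 2), r θ = 0 := by
    have hcl : closure (Set.Ioo 0 (π / 2)) ⊆ {θ | r θ = 0} :=
      closure_minimal h (isClosed_eq hr continuous_const)
    rw [closure_Ioo (by positivity)] at hcl
    exact hcl
  obtain ⟨y, hy, hry⟩ := hper.exists_mem_Ico₀ Real.pi_pos θ
  rw [hry]
  rcases le_total y (π / 2) with hle | hle
  · exact hIcc y ⟨hy.1, hle⟩
  · rw [← hsym]
    exact hIcc _ ⟨by linarith [hy.2], by linarith⟩


/-- Infinitesimal spectral rigidity of the ellipse using invariant curves inside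
the separatrix: if all the weighted Leray averages of a `ℤ₂ × ℤ₂`-symmetric
boundary variation `r` over the invariant curves `{I = α}`, `0 < α < 1`, vanish,
then `r = 0`. -/
theorem rigidity_inside_separatrix
    (a b c β : ℝ) (hab : b < a) (hb : 0 < b)
    (hc : c = Real.sqrt (a ^ 2 - b ^ 2)) (hβ : β = a ^ 2 / c ^ 2)
    (r : ℝ → ℝ) (hr : Continuous r)
    (hper : Function.Periodic r (2 * π))
    (heven : ∀ ϑ : ℝ, r (-ϑ) = r ϑ)
    (hsym : ∀ ϑ : ℝ, r (π - ϑ) = r ϑ)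
    (h : ∀ α ∈ Set.Ioo (0 : ℝ) 1,
      ∫ ϑ in {ϑ : ℝ | ϑ ∈ Set.Ico 0 (2 * π) ∧ Real.cos ϑ ^ 2 < α},
        r ϑ * (β - Real.cos ϑ ^ 2) ^ (-(1/2 : ℝ)) *
          (α - Real.cos ϑ ^ 2) ^ (-(1/2 : ℝ)) = 0) :
    ∀ ϑ : ℝ, r ϑ = 0 := by
  have hβ1 : 1 < β := by
    have hpos : 0 < a ^ 2 - b ^ 2 := by nlinarith
    rw [hβ, hc, Real.sq_sqrt hpos.le, one_lt_div hpos]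
    nlinarith
  have hβpos : ∀ ϑ : ℝ, 0 < β - Real.cos ϑ ^ 2 := fun ϑ => by
    linarith [Real.cos_sq_le_one ϑ]
  set g : ℝ → ℝ := fun ϑ => r ϑ * (β - Real.cos ϑ ^ 2) ^ (-(1/2 : ℝ)) with hgdef
  have hg : Continuous g :=
    hr.mul (Continuous.rpow_const (by fun_prop) fun ϑ => Or.inl (hβpos ϑ).ne')
  have h2π : (0 : ℝ) ≤ 2 * π := by positivity
  have hF : ∀ α ∈ Set.Ioo (0 : ℝ) 1,
      ∫ ϑ in Set.Ioc 0 (2 * π), g ϑ * (α - Real.cos ϑ ^ 2) ^ (-(1/2 : ℝ)) = 0 := by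
    intro α hα
    rw [← integral_Ico_eq_integral_Ioc]
    refine (setIntegral_eq_of_subset_of_forall_sdiff_eq_zero measurableSet_Ico
      (fun ϑ hϑ => hϑ.1) fun ϑ hϑ => ?_).trans (h α hα)
    have hle : α - Real.cos ϑ ^ 2 ≤ 0 := by
      by_contra hcon
      exact hϑ.2 ⟨hϑ.1, by linarith⟩
    rw [rpow_neg_half_of_nonpos hle, mul_zero]
  have hgint : Integrable g (volume.restrict (Set.Ioc 0 (2 * π))) :=
    (intervalIntegrable_iff_integrableOn_Ioc_of_le h2π).1 (hg.intervalIntegrable _ _)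
  have hsub : ∀ γ ∈ Set.Ioo (0 : ℝ) 1,
      ∫ ϑ in (0 : ℝ)..(2 * π), g ϑ * (if Real.cos ϑ ^ 2 < γ then π else 0) = 0 := by
    intro γ hγ
    rw [intervalIntegral.integral_of_le h2π,
      ← integral_abel_transform hgint (q := fun ϑ => Real.cos ϑ ^ 2) (by fun_prop) γ]
    refine integral_eq_zero_of_ae (Filter.Eventually.of_forall fun α => ?_)
    simp only [Pi.zero_apply]
    rcases le_or_gt γ α with hα | hα
    · rw [rpow_neg_half_of_nonpos (sub_nonpos.2 hα), zero_mul]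
    rcases le_or_gt α 0 with hα0 | hα0
    · have : ∀ ϑ : ℝ, (α - Real.cos ϑ ^ 2) ^ (-(1/2 : ℝ)) = 0 := fun ϑ =>
        rpow_neg_half_of_nonpos (by linarith [sq_nonneg (Real.cos ϑ)])
      simp only [this, mul_zero, integral_zero]
    · rw [hF α ⟨hα0, hα.trans hγ.2⟩, mul_zero]
  refine eq_zero_of_eq_zero_on_quadrant hr heven hsym fun ϑ hϑ => ?_
  have hgϑ : g ϑ = 0 := eq_zero_of_integral_sublevel_cos_sq hg
    (fun ϑ => by simp [hgdef, heven]) (fun ϑ => by simp [hgdef, hsym]) hsub hϑ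
  exact (mul_eq_zero.1 hgϑ).resolve_right (Real.rpow_pos_of_pos (hβpos ϑ) _).ne'
end

section
/- Let a > b > 0, c = √(a² − b²), and β = a²/c². Let r : ℝ → ℝ be continuous, 2π-periodic, even (r(−ϑ) = r(ϑ) for all ϑ), and satisfying r(π − ϑ) = r(ϑ) for all ϑ. Suppose that for every α ∈ (1, β), ∫₀^{2π} r(ϑ) · (β − cos²ϑ)^{−1/2} · (α − cos²ϑ)^{−1/2} dϑ = 0. Then r(ϑ) = 0 for every ϑ. -/
open Real MeasureTheory intervalIntegral

/-- Differentiating repeatedly in `α` under the integral sign: if the Abel-type integrals with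
exponent `-1/2` vanish on an interval of parameters, so do those with exponents `-1/2 - n`. -/
lemma integral_mul_rpow_sub_nat_eq_zero {u v m M : ℝ} {g x : ℝ → ℝ} (hg : Continuous g)
    (hx : Continuous x) (hxm : ∀ t, x t ≤ m)
    (h : ∀ α ∈ Set.Ioo m M, ∫ t in u..v, g t * (α - x t) ^ (-(1/2 : ℝ)) = 0) (n : ℕ) :
    ∀ α ∈ Set.Ioo m M, ∫ t in u..v, g t * (α - x t) ^ (-(1/2 : ℝ) - n) = 0 := by
  induction n with
  | zero => simpa using h
  | succ n ih =>
    intro α₀ hα₀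
    set p : ℝ := -(1/2 : ℝ) - n with hp
    have hp_neg : p < 0 := by
      have : (0 : ℝ) ≤ n := n.cast_nonneg
      rw [hp]; linarith
    have hp_succ : -(1/2 : ℝ) - (n + 1 : ℕ) = p - 1 := by push_cast; rw [hp]; ring
    have hcont : ∀ α > m, ∀ q : ℝ, Continuous fun t => (α - x t) ^ q := fun α hα q =>
      Continuous.rpow_const (by fun_prop) fun t =>
        Or.inl (sub_pos.2 ((hxm t).trans_lt hα)).ne'
    set d : ℝ := (α₀ + m) / 2 with hd
    have hmd : m < d := by have := hα₀.1; rw [hd]; linarith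
    have hdα : d < α₀ := by have := hα₀.1; rw [hd]; linarith
    have key := (hasDerivAt_integral_of_dominated_loc_of_deriv_le (μ := volume) (a := u) (b := v)
      (F := fun α t => g t * (α - x t) ^ p)
      (F' := fun α t => g t * (p * (α - x t) ^ (p - 1)))
      (bound := fun t => ‖g t‖ * (‖p‖ * (d - x t) ^ (p - 1)))
      (Ioi_mem_nhds hdα)
      (by
        filter_upwards [Ioi_mem_nhds hα₀.1] with α hα
        exact (hg.mul (hcont α hα p)).aestronglyMeasurable)
      ((hg.mul (hcont α₀ hα₀.1 p)).intervalIntegrable _ _)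
      (hg.mul (continuous_const.mul (hcont α₀ hα₀.1 (p - 1)))).aestronglyMeasurable
      (by
        refine .of_forall fun t _ α hα => ?_
        have h₁ : 0 < d - x t := by have := hxm t; linarith
        have h₂ : d - x t ≤ α - x t := by have := Set.mem_Ioi.1 hα; linarith
        rw [norm_mul, norm_mul, Real.norm_of_nonneg (rpow_nonneg (h₁.le.trans h₂) _)]
        gcongr ?_ * (?_ * ?_)
        exact rpow_le_rpow_of_nonpos h₁ h₂ (by linarith))
      ((hg.norm.mul (continuous_const.mul (hcont d hmd (p - 1)))).intervalIntegrable _ _)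
      (by
        refine .of_forall fun t _ α hα => ?_
        have h₁ : α - x t ≠ 0 := by
          have := hxm t
          have := Set.mem_Ioi.1 hα
          linarith
        have := ((hasDerivAt_id α).sub_const (x t)).rpow_const (p := p) (Or.inl h₁)
        simpa using this.const_mul (g t))).2
    have hzero : HasDerivAt (fun α => ∫ t in u..v, g t * (α - x t) ^ p) 0 α₀ := by
      refine (hasDerivAt_const α₀ (0 : ℝ)).congr_of_eventuallyEq ?_
      filter_upwards [Ioo_mem_nhds hα₀.1 hα₀.2] with α hα using ih α hα
    have hI := key.unique hzero
    have hfac : ∀ t, g t * (p * (α₀ - x t) ^ (p - 1)) = p * (g t * (α₀ - x t) ^ (p - 1)) :=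
      fun t => by ring
    simp only [hfac, intervalIntegral.integral_const_mul] at hI
    rw [hp_succ]
    exact (mul_eq_zero.1 hI).resolve_left hp_neg.ne

/-- A function which is orthogonal to all powers of `y`, for a positive weight `w`, and which is
a continuous function of `y`, vanishes. -/
lemma eq_zero_of_integral_mul_pow_eq_zero {u v A B : ℝ} (huv : u < v) {r w y f : ℝ → ℝ}
    (hr : Continuous r) (hw : Continuous w) (hwpos : ∀ t, 0 < w t) (hy : Continuous y)
    (hyAB : ∀ t, y t ∈ Set.Icc A B) (hf : ContinuousOn f (Set.Icc A B))
    (hrf : ∀ t, r t = f (y t)) (h : ∀ n : ℕ, ∫ t in u..v, r t * w t * y t ^ n = 0) :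
    ∀ t ∈ Set.Icc u v, r t = 0 := by
  have hpoly : ∀ P : Polynomial ℝ, ∫ t in u..v, r t * w t * P.eval (y t) = 0 := by
    intro P
    have : ∀ t, r t * w t * P.eval (y t)
        = ∑ i ∈ Finset.range (P.natDegree + 1), P.coeff i * (r t * w t * y t ^ i) := by
      intro t
      rw [Polynomial.eval_eq_sum_range, Finset.mul_sum]
      exact Finset.sum_congr rfl fun i _ => by ring
    simp only [this]
    rw [integral_finsetSum fun i _ => Continuous.intervalIntegrable (by fun_prop) _ _]
    exact Finset.sum_eq_zero fun i _ => by rw [intervalIntegral.integral_const_mul, h, mul_zero]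
  have hle : ∀ ε > 0, ∫ t in u..v, r t * w t * r t ≤ ε * ∫ t in u..v, |r t * w t| := by
    intro ε hε
    obtain ⟨P, hP⟩ := exists_polynomial_near_of_continuousOn A B f hf ε hε
    have hPc : Continuous fun t => r t * w t * P.eval (y t) :=
      (hr.mul hw).mul (P.continuous.comp hy)
    rw [← sub_zero (∫ t in u..v, r t * w t * r t), ← hpoly P,
      ← integral_sub (Continuous.intervalIntegrable (by fun_prop) _ _)
        (hPc.intervalIntegrable _ _), ← intervalIntegral.integral_const_mul]
    refine integral_mono_on huv.le
      (Continuous.intervalIntegrable (by fun_prop) _ _)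
      (Continuous.intervalIntegrable (by fun_prop) _ _) fun t _ => ?_
    calc r t * w t * r t - r t * w t * P.eval (y t)
        ≤ |r t * w t * (r t - P.eval (y t))| := by rw [← mul_sub]; exact le_abs_self _
      _ = |P.eval (y t) - f (y t)| * |r t * w t| := by
          rw [abs_mul, abs_sub_comm, ← hrf, mul_comm]
      _ ≤ ε * |r t * w t| := by gcongr; exact (hP _ (hyAB t)).le
  have hnonpos : ∫ t in u..v, r t * w t * r t ≤ 0 := by
    have hlim : Filter.Tendsto (fun ε : ℝ => ε * ∫ t in u..v, |r t * w t|)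
        (nhdsWithin 0 (Set.Ioi 0)) (nhds 0) := by
      have : Continuous fun ε : ℝ => ε * ∫ t in u..v, |r t * w t| := by fun_prop
      simpa using (this.tendsto 0).mono_left nhdsWithin_le_nhds
    exact ge_of_tendsto hlim (by filter_upwards [self_mem_nhdsWithin] with ε hε using hle ε hε)
  intro t ht
  by_contra hne
  refine hnonpos.not_gt (intervalIntegral.integral_pos huv
    (Continuous.continuousOn (by fun_prop)) (fun s _ => ?_) ⟨t, ht, ?_⟩)
  · have := mul_nonneg (hwpos s).le (mul_self_nonneg (r s)); linarith
  · have := mul_pos (hwpos t) (mul_self_pos.2 hne); linarith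

/-- A `2π`-periodic even function is determined by the cosine. -/
lemma eq_of_cos_eq_of_periodic_of_even {r : ℝ → ℝ} (hper : Function.Periodic r (2 * π))
    (heven : ∀ t, r (-t) = r t) {s t : ℝ} (hst : cos s = cos t) : r s = r t := by
  obtain ⟨k, rfl | rfl⟩ := cos_eq_cos_iff.1 hst
  · have := hper.int_mul k s
    rw [← this]; congr 1; ring
  · have := hper.int_mul k (-s)
    rw [← heven s, ← this]; congr 1; ring

/-- A `ℤ₂ × ℤ₂`-symmetric function is a function of the squared cosine. -/
lemma eq_arccos_sqrt_cos_sq {r : ℝ → ℝ} (hper : Function.Periodic r (2 * π))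
    (heven : ∀ t, r (-t) = r t) (hsym : ∀ t, r (π - t) = r t) (t : ℝ) :
    r t = r (arccos (√(cos t ^ 2))) := by
  have hcos : cos (arccos (√(cos t ^ 2))) = |cos t| := by
    rw [sqrt_sq_eq_abs, cos_arccos (by linarith [abs_nonneg (cos t)]) (abs_cos_le_one t)]
  rcases abs_choice (cos t) with h | h
  · exact eq_of_cos_eq_of_periodic_of_even hper heven (by rw [hcos, h])
  · rw [← hsym t]
    exact eq_of_cos_eq_of_periodic_of_even hper heven (by rw [hcos, h, cos_pi_sub])

/-- Infinitesimal spectral rigidity of the ellipse using invariant curves outside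
the separatrix: if all the weighted Leray averages of a `ℤ₂ × ℤ₂`-symmetric
boundary variation `r` over the invariant curves `{I = α}`, `1 < α < β`, vanish,
then `r = 0`. -/
theorem rigidity_outside_separatrix
    (a b c β : ℝ) (hab : b < a) (hb : 0 < b)
    (hc : c = Real.sqrt (a ^ 2 - b ^ 2)) (hβ : β = a ^ 2 / c ^ 2)
    (r : ℝ → ℝ) (hr : Continuous r)
    (hper : Function.Periodic r (2 * π))
    (heven : ∀ ϑ : ℝ, r (-ϑ) = r ϑ)
    (hsym : ∀ ϑ : ℝ, r (π - ϑ) = r ϑ)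
    (h : ∀ α ∈ Set.Ioo (1 : ℝ) β,
      ∫ ϑ in (0:ℝ)..(2 * π),
        r ϑ * (β - Real.cos ϑ ^ 2) ^ (-(1/2 : ℝ)) *
          (α - Real.cos ϑ ^ 2) ^ (-(1/2 : ℝ)) = 0) :
    ∀ ϑ : ℝ, r ϑ = 0 := by
  have hβ1 : 1 < β := by
    have hpos : 0 < a ^ 2 - b ^ 2 := by nlinarith
    rw [hβ, hc, sq_sqrt hpos.le, one_lt_div hpos]
    nlinarith
  obtain ⟨α, hα⟩ := exists_between hβ1
  have hpos : ∀ γ > 1, ∀ t, 0 < γ - cos t ^ 2 := fun γ hγ t => by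
    have := cos_sq_le_one t
    linarith
  have hcont : ∀ γ > 1, Continuous fun t => (γ - cos t ^ 2) ^ (-(1/2 : ℝ)) := fun γ hγ =>
    Continuous.rpow_const (by fun_prop) fun t => Or.inl (hpos γ hγ t).ne'
  have hmoment := fun n => integral_mul_rpow_sub_nat_eq_zero (hr.mul (hcont β hβ1))
    (by fun_prop : Continuous fun t => cos t ^ 2) cos_sq_le_one h n α hα
  have hzero := eq_zero_of_integral_mul_pow_eq_zero two_pi_pos hr
    ((hcont β hβ1).mul (hcont α hα.1))
    (fun t => mul_pos (rpow_pos_of_pos (hpos β hβ1 t) _) (rpow_pos_of_pos (hpos α hα.1 t) _))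
    (y := fun t => (α - cos t ^ 2)⁻¹) (A := α⁻¹) (B := (α - 1)⁻¹)
    (f := fun y => r (arccos (√(α - y⁻¹))))
    (Continuous.inv₀ (by fun_prop) fun t => (hpos α hα.1 t).ne')
    (fun t => ⟨inv_anti₀ (hpos α hα.1 t) (by linarith [sq_nonneg (cos t)]),
      inv_anti₀ (by linarith [hα.1]) (by linarith [cos_sq_le_one t])⟩)
    (by
      have hne : ∀ y ∈ Set.Icc α⁻¹ (α - 1)⁻¹, y ≠ 0 := fun y hy =>
        ((inv_pos.2 (one_pos.trans hα.1)).trans_le hy.1).ne'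
      exact hr.comp_continuousOn (continuous_arccos.comp_continuousOn
        (continuous_sqrt.comp_continuousOn
          (continuousOn_const.sub (continuousOn_id.inv₀ hne)))))
    (fun t => by
      simpa using eq_arccos_sqrt_cos_sq hper heven hsym t)
    (fun n => by
      refine (intervalIntegral.integral_congr fun t _ => ?_).trans (hmoment n)
      simp only [Pi.mul_apply, rpow_sub_natCast (hpos α hα.1 t).ne', inv_pow, div_eq_mul_inv]
      ring)
  intro ϑ
  obtain ⟨t, ht, hrt⟩ := hper.exists_mem_Ico₀ two_pi_pos ϑ
  rw [hrt]
  exact hzero t (Set.Ico_subset_Icc_self ht)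
end

section
/- Let a > b > 0 and c = √(a² − b²). Let q = (x, y) ∈ ℝ² be a point on the ellipse x²/a² + y²/b² = 1, and let n ∈ ℝ² be a unit vector parallel to the normal direction (x/a², y/b²) at q. For p = (p₁, p₂) ∈ ℝ², let p' = p − 2⟨p, n⟩·n be the reflection of p at q. Define the angular momenta about the two foci by L₁(p) = (x − c)·p₂ − y·p₁ and L₂(p) = (x + c)·p₂ − y·p₁. Then L₁(p)·L₂(p) = L₁(p')·L₂(p'). -/
open Real

/-- The quadratic form `p ↦ (x p₂ - y p₁)² - d p₂²` is invariant under reflection in the unit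
normal `(n₁, n₂)` as soon as the normal and tangent directions are conjugate for it. -/
theorem angular_form_reflection_invariant {x y d n₁ n₂ : ℝ} (p₁ p₂ : ℝ)
    (hn : n₁ ^ 2 + n₂ ^ 2 = 1)
    (hconj : (x * n₁ + y * n₂) * (x * n₂ - y * n₁) = d * (n₁ * n₂)) :
    (x * p₂ - y * p₁) ^ 2 - d * p₂ ^ 2 =
      (x * (p₂ - 2 * (p₁ * n₁ + p₂ * n₂) * n₂) - y * (p₁ - 2 * (p₁ * n₁ + p₂ * n₂) * n₁)) ^ 2
        - d * (p₂ - 2 * (p₁ * n₁ + p₂ * n₂) * n₂) ^ 2 := by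
  linear_combination
    4 * (p₁ * n₁ + p₂ * n₂) * (p₂ * n₁ - p₁ * n₂) * hconj
      - 4 * (p₁ * n₁ + p₂ * n₂)
        * ((x * p₂ - y * p₁) * (x * n₂ - y * n₁) - d * p₂ * n₂) * hn

/-- The normal and tangent directions of an ellipse are conjugate for the quadratic form
`p ↦ (x p₂ - y p₁)² - (a² - b²) p₂²`. -/
theorem ellipse_normal_tangent_conjugate {a b x y : ℝ} (ha : a ≠ 0) (hb : b ≠ 0)
    (hq : x ^ 2 / a ^ 2 + y ^ 2 / b ^ 2 = 1) (t : ℝ) :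
    (x * (t * (x / a ^ 2)) + y * (t * (y / b ^ 2))) *
        (x * (t * (y / b ^ 2)) - y * (t * (x / a ^ 2))) =
      (a ^ 2 - b ^ 2) * (t * (x / a ^ 2) * (t * (y / b ^ 2))) := by
  have hnormal : x * (t * (x / a ^ 2)) + y * (t * (y / b ^ 2)) = t := by
    linear_combination t * hq
  rw [hnormal]
  field_simp

/-- Complete integrability of elliptic billiards: the product `L₁L₂` of the
angular momenta about the two foci is invariant under reflection of the
momentum at the boundary of the ellipse. -/
theorem product_angular_momenta_reflection_invariant
    (a b c : ℝ) (hab : b < a) (hb : 0 < b) (hc : c = Real.sqrt (a ^ 2 - b ^ 2))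
    (x y : ℝ) (hq : x ^ 2 / a ^ 2 + y ^ 2 / b ^ 2 = 1)
    (n : ℝ × ℝ) (hn : n.1 ^ 2 + n.2 ^ 2 = 1)
    (hpar : ∃ t : ℝ, n = (t * (x / a ^ 2), t * (y / b ^ 2)))
    (p : ℝ × ℝ) :
    let p' : ℝ × ℝ := (p.1 - 2 * (p.1 * n.1 + p.2 * n.2) * n.1,
                       p.2 - 2 * (p.1 * n.1 + p.2 * n.2) * n.2)
    let L₁ : ℝ × ℝ → ℝ := fun q => (x - c) * q.2 - y * q.1
    let L₂ : ℝ × ℝ → ℝ := fun q => (x + c) * q.2 - y * q.1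
    L₁ p * L₂ p = L₁ p' * L₂ p' := by
  have hc2 : c ^ 2 = a ^ 2 - b ^ 2 := by
    rw [hc, Real.sq_sqrt (by nlinarith)]
  obtain ⟨t, rfl⟩ := hpar
  have hconj := ellipse_normal_tangent_conjugate (hb.trans hab).ne' hb.ne' hq t
  rw [← hc2] at hconj
  intro p' L₁ L₂
  have key := angular_form_reflection_invariant p.1 p.2 hn hconj
  simp only [L₁, L₂, p']
  linear_combination key
end
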